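/- Let n ≥ 1 and k > 0 be fixed, and let p : Fin n → Fin n → ℝ be a probability mass function on pairs with p i j > 0 for all i, j; write q i := ∑_j p i j for the marginal (assume the symmetric marginal ∑_i p i j equals q j as well, i.e. p has equal row and column marginals, or simply use marginals qᵣ i = ∑_j p i j and q_c j = ∑_i p i j). Define the objective F(x) = ∑_{i,j} [ p i j * Real.log (x i j) + qᵣ i * q_c j * k * Real.log (1 - x i j) ] over matrices x : Fin n → Fin n → ℝ with 0 < x i j < 1 for all i, j. Then F attains its maximum over all such matrices at the matrix x* given by x* i j = σ( log (p i j / (qᵣ i * q_c j)) - log k ), where σ(t) = 1/(1 + exp(-t)); that is, for every x with entries in (0,1), F(x) ≤ F(x*), with equality iff x = x*. -/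

import Mathlib

open scoped BigOperators

/-- The logistic sigmoid function σ(t) = 1/(1 + e^{-t}). -/
noncomputable def logisticSigmoid (t : ℝ) : ℝ := 1 / (1 + Real.exp (-t))

lemma sgns_aux {a b y : ℝ} (ha : 0 < a) (hb : 0 < b) (hy : 0 < y) (hy1 : y < 1)
    (hne : y ≠ a / (a + b)) :
    a * Real.log y + b * Real.log (1 - y)
      < a * Real.log (a / (a + b)) + b * Real.log (1 - a / (a + b)) := by
  have hab : 0 < a + b := by positivity
  have h1 : 1 - a / (a + b) = b / (a + b) := by field_simp; ring
  rw [h1]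
  have hs : 0 < a / (a + b) := by positivity
  have ht : 0 < b / (a + b) := by positivity
  have hy2 : 0 < 1 - y := by linarith
  have e1 : Real.log (y / (a / (a + b))) < y / (a / (a + b)) - 1 := by
    apply Real.log_lt_sub_one_of_pos (by positivity)
    intro h
    exact hne ((div_eq_one_iff_eq hs.ne').1 h)
  have e2 : Real.log ((1 - y) / (b / (a + b))) ≤ (1 - y) / (b / (a + b)) - 1 :=
    Real.log_le_sub_one_of_pos (by positivity)
  rw [Real.log_div hy.ne' hs.ne'] at e1
  rw [Real.log_div hy2.ne' ht.ne'] at e2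
  have f1 := mul_lt_mul_of_pos_left e1 ha
  have f2 := mul_le_mul_of_nonneg_left e2 hb.le
  have g1 : a * (y / (a / (a + b)) - 1) = (a + b) * y - a := by field_simp
  have g2 : b * ((1 - y) / (b / (a + b)) - 1) = (a + b) * (1 - y) - b := by field_simp
  rw [g1] at f1
  rw [g2] at f2
  linarith

/-- **Theorem 1.** The Nonsigmoid SGNS objective
`F(x) = ∑_{i,j} [ p i j * log (x i j) + qᵣ i * q_c j * k * log (1 - x i j) ]`
over matrices with entries in `(0,1)` attains its maximum exactly at the matrix
`x* i j = σ( log (p i j / (qᵣ i * q_c j)) - log k )`, the squashed shifted PMI matrix. -/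
theorem nonsigmoid_sgns_optimum
    {n : ℕ} (hn : 1 ≤ n) {k : ℝ} (hk : 0 < k)
    (p : Fin n → Fin n → ℝ) (hpos : ∀ i j, 0 < p i j)
    (hpmf : ∑ i, ∑ j, p i j = 1)
    (qr qc : Fin n → ℝ)
    (hqr : ∀ i, qr i = ∑ j, p i j)
    (hqc : ∀ j, qc j = ∑ i, p i j)
    (F : (Fin n → Fin n → ℝ) → ℝ)
    (hF : ∀ x, F x = ∑ i, ∑ j,
      (p i j * Real.log (x i j) + qr i * qc j * k * Real.log (1 - x i j)))
    (xstar : Fin n → Fin n → ℝ)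
    (hxstar : ∀ i j, xstar i j =
      logisticSigmoid (Real.log (p i j / (qr i * qc j)) - Real.log k)) :
    (∀ i j, 0 < xstar i j ∧ xstar i j < 1) ∧
    ∀ x : Fin n → Fin n → ℝ, (∀ i j, 0 < x i j ∧ x i j < 1) →
      F x ≤ F xstar ∧ (F x = F xstar ↔ x = xstar) := by
  have hq : ∀ i j, 0 < qr i * qc j * k := by
    intro i j
    have : 0 < qr i := by
      rw [hqr]; exact Finset.sum_pos (fun j _ => hpos i j) ⟨j, Finset.mem_univ _⟩
    have : 0 < qc j := by
      rw [hqc]; exact Finset.sum_pos (fun i _ => hpos i j) ⟨i, Finset.mem_univ _⟩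
    positivity
  have hx : ∀ i j, xstar i j = p i j / (p i j + qr i * qc j * k) := by
    intro i j
    have hp := hpos i j
    have hb := hq i j
    have hc : 0 < qr i * qc j := pos_of_mul_pos_left hb hk.le
    rw [hxstar, logisticSigmoid, ← Real.log_div (by positivity) hk.ne', Real.exp_neg,
      Real.exp_log (by positivity)]
    generalize qr i * qc j = c at *
    field_simp
  refine ⟨fun i j => ?_, fun x hx01 => ?_⟩
  · have hp := hpos i j
    have hb := hq i j
    rw [hx]
    exact ⟨by positivity, by rw [div_lt_one (by positivity)]; linarith⟩
  have hlt : ∀ i j, x i j ≠ xstar i j →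
      p i j * Real.log (x i j) + qr i * qc j * k * Real.log (1 - x i j)
      < p i j * Real.log (xstar i j) + qr i * qc j * k * Real.log (1 - xstar i j) := by
    intro i j h
    rw [hx] at h ⊢
    exact sgns_aux (hpos i j) (hq i j) (hx01 i j).1 (hx01 i j).2 h
  have hle : ∀ i j,
      p i j * Real.log (x i j) + qr i * qc j * k * Real.log (1 - x i j)
      ≤ p i j * Real.log (xstar i j) + qr i * qc j * k * Real.log (1 - xstar i j) := by
    intro i j
    by_cases h : x i j = xstar i j
    · rw [h]
    · exact (hlt i j h).le
  refine ⟨?_, fun h => ?_, fun h => by rw [h]⟩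
  · rw [hF, hF]
    exact Finset.sum_le_sum fun i _ => Finset.sum_le_sum fun j _ => hle i j
  · by_contra hne
    obtain ⟨i, hi⟩ := Function.ne_iff.1 hne
    obtain ⟨j, hj⟩ := Function.ne_iff.1 hi
    refine absurd h (ne_of_lt ?_)
    rw [hF, hF]
    refine Finset.sum_lt_sum (fun i _ => Finset.sum_le_sum fun j _ => hle i j)
      ⟨i, Finset.mem_univ _, ?_⟩
    exact Finset.sum_lt_sum (fun j _ => hle i j) ⟨j, Finset.mem_univ _, hlt i j hj⟩
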